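/- Let k, i, j be integers with 1 < i < k and j ≥ 1. Set K = k + 2(j−1) and F = {i+j−1,…,i+2(j−1)} (a block of j consecutive elements). The number of permutations σ of {1,…,K} such that σ(F) = F and σ fixes no prefix of size s for any s ∈ {j,…,i+j−2} ∪ {i+2(j−1),…,K−1} equals j!·c_{k+j−2}^{{j,…,k+j−3}}. -/

import Mathlib

open Nat Finset

/-- The prefix `{1, …, j}` of `{1, …, n}`. We represent `{1, …, n}` by `Fin n`,
an element `x : Fin n` having label `x.val + 1`; so the prefix of size `j` is the
set of elements with label at most `j`. -/
def pref (n j : ℕ) : Finset (Fin n) :=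
  Finset.univ.filter (fun x => x.val + 1 ≤ j)

/-- The segment `{u, …, v}` inside `{1, …, n}` (labels as above). -/
def seg (n u v : ℕ) : Finset (Fin n) :=
  Finset.univ.filter (fun x => u ≤ x.val + 1 ∧ x.val + 1 ≤ v)

/-- A permutation `σ` of `{1, …, n}` fixes a prefix of size `j` if
`σ({1, …, j}) = {1, …, j}`. -/
def FixesPrefix {n : ℕ} (σ : Equiv.Perm (Fin n)) (j : ℕ) : Prop :=
  (pref n j).image σ = pref n j

/-- `c n`: the number of connected permutations of size `n`, i.e. permutations of
`{1, …, n}` fixing no prefix of size `j` for any `1 ≤ j ≤ n - 1`. -/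
noncomputable def c (n : ℕ) : ℕ :=
  Nat.card {σ : Equiv.Perm (Fin n) // ∀ j, 1 ≤ j → j ≤ n - 1 → ¬ FixesPrefix σ j}

/-- `cS n S`: the number of `S`-connected permutations of size `n`, i.e. permutations of
`{1, …, n}` fixing no prefix of size `j` for any `j ∈ S`. -/
noncomputable def cS (n : ℕ) (S : Finset ℕ) : ℕ :=
  Nat.card {σ : Equiv.Perm (Fin n) // ∀ j ∈ S, ¬ FixesPrefix σ j}

theorem image_perm_eq_iff {n : ℕ} (σ : Equiv.Perm (Fin n)) (s : Finset (Fin n)) :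
    s.image σ = s ↔ ∀ x ∈ s, σ x ∈ s := by
  constructor
  · intro h x hx
    rw [← h]
    exact Finset.mem_image_of_mem _ hx
  · intro h
    apply Finset.eq_of_subset_of_card_le
    · intro y hy
      obtain ⟨x, hx, rfl⟩ := Finset.mem_image.1 hy
      exact h x hx
    · rw [Finset.card_image_of_injective _ σ.injective]

theorem fixesPrefix_iff {n : ℕ} (σ : Equiv.Perm (Fin n)) (s : ℕ) :
    FixesPrefix σ s ↔ ∀ x : Fin n, x.val < s → (σ x).val < s := by
  unfold FixesPrefix
  rw [image_perm_eq_iff]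
  simp [pref, Nat.succ_le_iff]

theorem exists_split (K a j m : ℕ) (hK : K = m + j) (ha : a ≤ m) :
    ∃ e : Fin j ⊕ Fin m ≃ Fin K, (∀ x, (e (Sum.inl x)).val = a + x.val) ∧
      ∀ y, (e (Sum.inr y)).val = if y.val < a then y.val else y.val + j := by
  let f : Fin j ⊕ Fin m → Fin K := Sum.elim (fun x => ⟨a + x.val, by omega⟩)
    (fun y => ⟨if y.val < a then y.val else y.val + j, by split_ifs <;> omega⟩)
  have hf : Function.Injective f := by
    rintro (x | x) (y | y) h <;> simp only [f, Sum.elim_inl, Sum.elim_inr, Fin.mk.injEq] at h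
    · congr 1; ext; omega
    · split_ifs at h <;> omega
    · split_ifs at h <;> omega
    · congr 1; ext; split_ifs at h <;> omega
  have hb : Function.Bijective f := by
    rw [Fintype.bijective_iff_injective_and_card]
    exact ⟨hf, by simp; omega⟩
  exact ⟨Equiv.ofBijective f hb, fun x => rfl, fun y => rfl⟩

theorem count_aux (K a j m : ℕ) (hK : K = m + j) (ha : a < m) (hja : j ≤ a) :
    Nat.card {σ : Equiv.Perm (Fin K) //
      (seg K (a + 1) (a + j)).image σ = seg K (a + 1) (a + j) ∧
      ∀ s ∈ Finset.Icc j a ∪ Finset.Icc (a + j) (K - 1), ¬ FixesPrefix σ s}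
    = j ! * cS m (Finset.Icc j (m - 1)) := by
  obtain ⟨e, hl, hr⟩ := exists_split K a j m hK ha.le
  have hcardj : j ! = Nat.card (Equiv.Perm (Fin j)) := by
    rw [Nat.card_eq_fintype_card, Fintype.card_perm, Fintype.card_fin]
  rw [cS, hcardj, ← Nat.card_prod]
  symm
  have hlow : ∀ (ρ : Equiv.Perm (Fin j)) (τ : Equiv.Perm (Fin m)) (s : ℕ), s ≤ a →
      (FixesPrefix (e.permCongr (Equiv.Perm.sumCongr ρ τ)) s ↔ FixesPrefix τ s) := by
    intro ρ τ s hs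
    have hv : ∀ y, (e (Sum.inr y)).val < s ↔ y.val < s := by
      intro y; rw [hr]; split_ifs <;> omega
    rw [fixesPrefix_iff, fixesPrefix_iff, ← e.forall_congr_right]
    simp only [Equiv.permCongr_apply, Equiv.symm_apply_apply, Sum.forall,
      Equiv.Perm.sumCongr_apply, Sum.map_inl, Sum.map_inr, hv, hl]
    constructor
    · exact fun h => h.2
    · exact fun h => ⟨fun x hx => by omega, h⟩
  have hhigh : ∀ (ρ : Equiv.Perm (Fin j)) (τ : Equiv.Perm (Fin m)) (s : ℕ), a ≤ s →
      (FixesPrefix (e.permCongr (Equiv.Perm.sumCongr ρ τ)) (s + j) ↔ FixesPrefix τ s) := by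
    intro ρ τ s hs
    have hv : ∀ y, (e (Sum.inr y)).val < s + j ↔ y.val < s := by
      intro y; rw [hr]; split_ifs <;> omega
    rw [fixesPrefix_iff, fixesPrefix_iff, ← e.forall_congr_right]
    simp only [Equiv.permCongr_apply, Equiv.symm_apply_apply, Sum.forall,
      Equiv.Perm.sumCongr_apply, Sum.map_inl, Sum.map_inr, hv, hl]
    constructor
    · exact fun h => h.2
    · exact fun h => ⟨fun x hx => by have := (ρ x).isLt; omega, h⟩
  have hcond : ∀ (ρ : Equiv.Perm (Fin j)) (τ : Equiv.Perm (Fin m)),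
      (∀ s ∈ Finset.Icc j a ∪ Finset.Icc (a + j) (K - 1),
        ¬ FixesPrefix (e.permCongr (Equiv.Perm.sumCongr ρ τ)) s) ↔
      ∀ s ∈ Finset.Icc j (m - 1), ¬ FixesPrefix τ s := by
    intro ρ τ
    simp only [Finset.mem_union, Finset.mem_Icc]
    constructor
    · intro h s hs
      by_cases hsa : s ≤ a
      · rw [← hlow ρ τ s hsa]
        exact h s (Or.inl ⟨hs.1, hsa⟩)
      · rw [← hhigh ρ τ s (by omega)]
        exact h (s + j) (Or.inr (by omega))
    · rintro h s (hs | hs)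
      · rw [hlow ρ τ s hs.2]
        exact h s (by omega)
      · obtain ⟨t, rfl⟩ : ∃ t, s = t + j := ⟨s - j, by omega⟩
        rw [hhigh ρ τ t (by omega)]
        exact h t (by omega)
  have hsegl : ∀ x, e (Sum.inl x) ∈ seg K (a + 1) (a + j) := by
    intro x
    have := hl x
    simp only [seg, Finset.mem_filter, Finset.mem_univ, true_and]
    omega
  have hsegr : ∀ y, e (Sum.inr y) ∉ seg K (a + 1) (a + j) := by
    intro y
    have := hr y
    simp only [seg, Finset.mem_filter, Finset.mem_univ, true_and]
    split_ifs at this <;> omega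
  have hseg : ∀ (ρ : Equiv.Perm (Fin j)) (τ : Equiv.Perm (Fin m)),
      (seg K (a + 1) (a + j)).image (e.permCongr (Equiv.Perm.sumCongr ρ τ))
        = seg K (a + 1) (a + j) := by
    intro ρ τ
    rw [image_perm_eq_iff, ← e.forall_congr_right]
    rintro (x | x) hx
    · simpa using hsegl _
    · exact absurd hx (hsegr x)
  refine Nat.card_eq_of_bijective (fun p => ⟨e.permCongr (Equiv.Perm.sumCongr p.1 p.2.1),
    hseg _ _, (hcond _ _).2 p.2.2⟩) ⟨?_, ?_⟩
  · rintro ⟨ρ, τ, hτ⟩ ⟨ρ', τ', hτ'⟩ h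
    have h2 := e.permCongr.injective (Subtype.ext_iff.1 h)
    have h3 := Equiv.Perm.sumCongrHom_injective (a₁ := (ρ, τ)) (a₂ := (ρ', τ')) h2
    simp only [Prod.mk.injEq] at h3
    obtain ⟨rfl, rfl⟩ := h3
    rfl
  · rintro ⟨σ, h1, h2⟩
    have hm : Set.MapsTo (e.symm.permCongr σ) (Set.range Sum.inl) (Set.range Sum.inl) := by
      rintro _ ⟨x, rfl⟩
      have := (image_perm_eq_iff _ _).1 h1 _ (hsegl x)
      rcases hz : e.symm (σ (e (Sum.inl x))) with z | z
      · exact ⟨z, by simp [Equiv.permCongr_apply, hz]⟩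
      · rw [Equiv.symm_apply_eq] at hz
        rw [hz] at this
        exact absurd this (hsegr z)
    obtain ⟨⟨ρ, τ⟩, hp⟩ := Equiv.Perm.mem_sumCongrHom_range_of_perm_mapsTo_inl hm
    have hσ : σ = e.permCongr (Equiv.Perm.sumCongr ρ τ) := by
      have : Equiv.Perm.sumCongr ρ τ = e.symm.permCongr σ := hp
      rw [this]
      ext x
      simp [Equiv.permCongr_apply]
    subst hσ
    exact ⟨(ρ, ⟨τ, (hcond _ _).1 h2⟩), rfl⟩

/-- For `1 < i < k` and `j ≥ 1`, with `K = k + 2(j−1)` and `F = {i+j−1,…,i+2(j−1)}`,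
the number of permutations `σ` of `{1,…,K}` such that `σ(F) = F` and `σ` fixes no prefix of
size `s` for any `s ∈ {j,…,i+j−2} ∪ {i+2(j−1),…,K−1}` equals `j!·c_{k+j−2}^{{j,…,k+j−3}}`. -/
theorem count_fan_fixed (k i j : ℕ) (h1 : 1 < i) (h2 : i < k) (hj : 1 ≤ j) :
    Nat.card {σ : Equiv.Perm (Fin (k + 2 * (j - 1))) //
      (seg (k + 2 * (j - 1)) (i + j - 1) (i + 2 * (j - 1))).image σ =
        seg (k + 2 * (j - 1)) (i + j - 1) (i + 2 * (j - 1)) ∧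
      ∀ s ∈ Finset.Icc j (i + j - 2) ∪
          Finset.Icc (i + 2 * (j - 1)) (k + 2 * (j - 1) - 1), ¬ FixesPrefix σ s}
    = j ! * cS (k + j - 2) (Finset.Icc j (k + j - 3)) := by
  have h := count_aux (k + 2 * (j - 1)) (i + j - 2) j (k + j - 2) (by omega) (by omega) (by omega)
  have e1 : i + j - 2 + 1 = i + j - 1 := by omega
  have e2 : i + j - 2 + j = i + 2 * (j - 1) := by omega
  have e3 : k + j - 2 - 1 = k + j - 3 := by omega
  rw [e1, e2, e3] at h
  exact h
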